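/- arXiv:1707.01130 — 2 statements merged into one kernel-verified Lean document; each statement's English description precedes it below -/
import Mathlib

section
/- Let Y be an ℝ^p-valued random vector with the multivariate normal distribution N_p(0, Σ) for a symmetric positive definite matrix Σ, and let U be a real random variable independent of Y with the Gamma distribution with shape ν/2 and rate ν/2 (i.e., U = V/ν where V is chi-squared with ν degrees of freedom), where ν > 0. Then the random vector X = μ + Y / √U has the multivariate t distribution, i.e., the law of X has density f(·; μ, Σ, ν) with respect to Lebesgue measure on ℝ^p. -/
open Matrix MeasureTheory ProbabilityTheory

/-- The multivariate t density on ℝ^p with location `μ`, scatter matrix `S` and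
degrees of freedom `ν`. -/
noncomputable def mvtPdf (p : ℕ) (μ : Fin p → ℝ) (S : Matrix (Fin p) (Fin p) ℝ)
    (ν : ℝ) (x : Fin p → ℝ) : ℝ :=
  Real.Gamma ((ν + p) / 2) * S.det ^ (-(1 : ℝ) / 2) /
      ((Real.pi * ν) ^ ((p : ℝ) / 2) * Real.Gamma (ν / 2)) *
    (1 + (x - μ) ⬝ᵥ (S⁻¹ *ᵥ (x - μ)) / ν) ^ (-((ν + p) / 2))

/-- The multivariate normal density `N_p(μ, C)` for a positive definite `C`. -/
noncomputable def mvnPdf (p : ℕ) (μ : Fin p → ℝ) (C : Matrix (Fin p) (Fin p) ℝ)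
    (x : Fin p → ℝ) : ℝ :=
  (2 * Real.pi) ^ (-(p : ℝ) / 2) * C.det ^ (-(1 : ℝ) / 2) *
    Real.exp (-(1 / 2) * ((x - μ) ⬝ᵥ (C⁻¹ *ᵥ (x - μ))))

/-!
Conditionally on `U = u`, the vector `X` has density `u ^ (p / 2) φ(√u (x - μ))`, where `φ` is the
density of `N_p(0, Σ)`; hence the density of `X` is the average of these over the law of `U`. As a
function of `u` the integrand is a constant times `u ^ (p / 2) exp (-s(x) u / 2)`, and multiplying a
Gamma density by such a factor gives a multiple of another Gamma density. That multiple is the value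
of the integral, and it is the t density.
-/

section ScaleMixture

variable {E : Type*} [NormedAddCommGroup E] [NormedSpace ℝ E] [FiniteDimensional ℝ E]
  [MeasurableSpace E] [BorelSpace E] (ρ : Measure E) [ρ.IsAddHaarMeasure]

lemma lintegral_abs_pow_finrank_mul_comp_smul_sub (m : E) {r : ℝ} (hr : r ≠ 0)
    {h : E → ENNReal} (hh : Measurable h) :
    ∫⁻ x, ENNReal.ofReal |r ^ Module.finrank ℝ E| * h (r • (x - m)) ∂ρ = ∫⁻ y, h y ∂ρ := by
  have hpow : r ^ Module.finrank ℝ E ≠ 0 := pow_ne_zero _ hr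
  have hscale : ∫⁻ x, h (r • x) ∂ρ =
      ENNReal.ofReal |(r ^ Module.finrank ℝ E)⁻¹| * ∫⁻ y, h y ∂ρ := by
    rw [← lintegral_map hh (measurable_const_smul r), Measure.map_addHaar_smul ρ hr,
      lintegral_smul_measure, smul_eq_mul]
  rw [lintegral_const_mul _ (by fun_prop), lintegral_sub_right_eq_self (fun x ↦ h (r • x)) m,
    hscale, ← mul_assoc, ← ENNReal.ofReal_mul (abs_nonneg _), ← abs_mul, mul_inv_cancel₀ hpow,
    abs_one, ENNReal.ofReal_one, one_mul]

lemma lintegral_withDensity_comp_add_inv_smul (m : E) {r : ℝ} (hr : r ≠ 0)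
    {g f : E → ENNReal} (hg : Measurable g) (hf : Measurable f) :
    ∫⁻ y, f (m + r⁻¹ • y) ∂ρ.withDensity g =
      ∫⁻ x, ENNReal.ofReal |r ^ Module.finrank ℝ E| * g (r • (x - m)) * f x ∂ρ := by
  have hf' : Measurable fun y ↦ f (m + r⁻¹ • y) := by fun_prop
  rw [lintegral_withDensity_eq_lintegral_mul _ hg hf',
    ← lintegral_abs_pow_finrank_mul_comp_smul_sub ρ m hr (hg.mul hf')]
  simp only [Pi.mul_apply, inv_smul_smul₀ hr, add_sub_cancel, mul_assoc]

lemma map_add_inv_smul_prod_withDensity (m : E) {κ : Measure ℝ} [SFinite κ]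
    (hκ : ∀ᵐ r ∂κ, r ≠ 0) {g : E → ENNReal} (hg : Measurable g) :
    ((ρ.withDensity g).prod κ).map (fun z ↦ m + z.2⁻¹ • z.1) =
      ρ.withDensity fun x ↦
        ∫⁻ r, ENNReal.ofReal |r ^ Module.finrank ℝ E| * g (r • (x - m)) ∂κ := by
  refine Measure.ext_of_lintegral _ fun f hf ↦ ?_
  have hmixed : Measurable fun z : E × ℝ ↦
      ENNReal.ofReal |z.2 ^ Module.finrank ℝ E| * g (z.2 • (z.1 - m)) := by fun_prop
  calc
    _ = ∫⁻ r, ∫⁻ y, f (m + r⁻¹ • y) ∂ρ.withDensity g ∂κ := by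
      rw [lintegral_map hf (by fun_prop), lintegral_prod_symm' _ (by fun_prop)]
    _ = ∫⁻ r, ∫⁻ x, ENNReal.ofReal |r ^ Module.finrank ℝ E| * g (r • (x - m)) * f x ∂ρ ∂κ :=
      lintegral_congr_ae <| hκ.mono fun r hr ↦
        lintegral_withDensity_comp_add_inv_smul ρ m hr hg hf
    _ = ∫⁻ x, (∫⁻ r, ENNReal.ofReal |r ^ Module.finrank ℝ E| * g (r • (x - m)) ∂κ) * f x ∂ρ := by
      rw [lintegral_lintegral_swap (by fun_prop)]
      exact lintegral_congr fun x ↦ lintegral_mul_const _ (by fun_prop)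
    _ = _ := (lintegral_withDensity_eq_lintegral_mul _ hmixed.lintegral_prod_right' hf).symm

theorem map_add_inv_smul_eq_withDensity_of_indepFun {Ω : Type*} [MeasurableSpace Ω]
    {P : Measure Ω} [IsFiniteMeasure P] {Y : Ω → E} {R : Ω → ℝ} (hYm : AEMeasurable Y P)
    (hRm : AEMeasurable R P) (hindep : IndepFun Y R P) (hR : ∀ᵐ ω ∂P, R ω ≠ 0)
    {g : E → ENNReal} (hg : Measurable g) (hY : P.map Y = ρ.withDensity g) (m : E) :
    P.map (fun ω ↦ m + (R ω)⁻¹ • Y ω) =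
      ρ.withDensity fun x ↦
        ∫⁻ ω, ENNReal.ofReal |R ω ^ Module.finrank ℝ E| * g (R ω • (x - m)) ∂P := by
  have hR' : ∀ᵐ r ∂P.map R, r ≠ 0 :=
    (ae_map_iff hRm (measurableSet_singleton 0).compl).2 hR
  calc
    _ = (P.map fun ω ↦ (Y ω, R ω)).map (fun z ↦ m + z.2⁻¹ • z.1) :=
      (AEMeasurable.map_map_of_aemeasurable (by fun_prop) (hYm.prodMk hRm)).symm
    _ = ρ.withDensity fun x ↦
        ∫⁻ r, ENNReal.ofReal |r ^ Module.finrank ℝ E| * g (r • (x - m)) ∂P.map R := by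
      rw [hindep.map_prod_eq_prod_map_map hYm hRm, hY, map_add_inv_smul_prod_withDensity ρ m hR' hg]
    _ = _ := by
      congr with x
      exact lintegral_map' (by fun_prop) hRm

end ScaleMixture

section Gamma

lemma measurable_gammaPDF (a b : ℝ) : Measurable (gammaPDF a b) :=
  (measurable_gammaPDFReal a b).ennreal_ofReal

lemma ae_pos_gammaMeasure (a b : ℝ) : ∀ᵐ u ∂gammaMeasure a b, 0 < u := by
  rw [gammaMeasure, ae_withDensity_iff (measurable_gammaPDF a b)]
  filter_upwards [Measure.ae_ne volume (0 : ℝ)] with u hu hpdf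
  exact hu.lt_or_gt.resolve_left fun hneg ↦ hpdf (gammaPDF_of_neg hneg)

lemma gammaPDFReal_mul_rpow_mul_exp {a b k s u : ℝ} (hak : 0 < a + k) (hbs : 0 < b + s)
    (hu : 0 < u) :
    gammaPDFReal a b u * (u ^ k * Real.exp (-(s * u))) =
      Real.Gamma (a + k) / Real.Gamma a * (b ^ a / (b + s) ^ (a + k)) *
        gammaPDFReal (a + k) (b + s) u := by
  have hpow : u ^ (a + k - 1) = u ^ (a - 1) * u ^ k := by
    rw [← Real.rpow_add hu, sub_add_eq_add_sub]
  have hexp : Real.exp (-((b + s) * u)) = Real.exp (-(b * u)) * Real.exp (-(s * u)) := by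
    rw [← Real.exp_add, add_mul, neg_add]
  have hGamma : Real.Gamma (a + k) ≠ 0 := (Real.Gamma_pos_of_pos hak).ne'
  have hrate : (b + s) ^ (a + k) ≠ 0 := (Real.rpow_pos_of_pos hbs _).ne'
  rw [gammaPDFReal, gammaPDFReal, if_pos hu.le, if_pos hu.le, hpow, hexp]
  field_simp

lemma lintegral_rpow_mul_exp_gammaMeasure {a b k s : ℝ} (hak : 0 < a + k) (hbs : 0 < b + s) :
    ∫⁻ u, ENNReal.ofReal (u ^ k * Real.exp (-(s * u))) ∂gammaMeasure a b =
      ENNReal.ofReal (Real.Gamma (a + k) / Real.Gamma a * (b ^ a / (b + s) ^ (a + k))) := by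
  set c := Real.Gamma (a + k) / Real.Gamma a * (b ^ a / (b + s) ^ (a + k))
  calc
    _ = ∫⁻ u, gammaPDF a b u * ENNReal.ofReal (u ^ k * Real.exp (-(s * u))) :=
      lintegral_withDensity_eq_lintegral_mul _ (measurable_gammaPDF a b) (by fun_prop)
    _ = ∫⁻ u, ENNReal.ofReal c * gammaPDF (a + k) (b + s) u := by
      refine lintegral_congr_ae ?_
      filter_upwards [Measure.ae_ne volume (0 : ℝ)] with u hu
      rcases hu.lt_or_gt with hneg | hpos
      · rw [gammaPDF_of_neg hneg, gammaPDF_of_neg hneg, zero_mul, mul_zero]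
      · rw [gammaPDF, gammaPDF, ← ENNReal.ofReal_mul' (by positivity),
          ← ENNReal.ofReal_mul' (gammaPDFReal_nonneg hak hbs u),
          gammaPDFReal_mul_rpow_mul_exp hak hbs hpos]
    _ = ENNReal.ofReal c := by
      rw [lintegral_const_mul _ (measurable_gammaPDF _ _), lintegral_gammaPDF_eq_one hak hbs,
        mul_one]

end Gamma

section MahalanobisSq

variable {n : Type*} [Fintype n] [DecidableEq n]

/-- The squared Mahalanobis norm `vᵀ S⁻¹ v`; the quantity `s(x)` in the t density is
`mahalanobisSq S (x - μ)`. -/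
noncomputable def mahalanobisSq (S : Matrix n n ℝ) (v : n → ℝ) : ℝ :=
  v ⬝ᵥ (S⁻¹ *ᵥ v)

lemma mahalanobisSq_nonneg {S : Matrix n n ℝ} (hS : S.PosDef) (v : n → ℝ) :
    0 ≤ mahalanobisSq S v := by
  simpa only [star_trivial, mahalanobisSq] using hS.inv.posSemidef.dotProduct_mulVec_nonneg v

lemma mahalanobisSq_smul (S : Matrix n n ℝ) (r : ℝ) (v : n → ℝ) :
    mahalanobisSq S (r • v) = r ^ 2 * mahalanobisSq S v := by
  simp only [mahalanobisSq, mulVec_smul, smul_dotProduct, dotProduct_smul, smul_eq_mul]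
  ring

@[fun_prop]
lemma continuous_mahalanobisSq (S : Matrix n n ℝ) : Continuous (mahalanobisSq S) := by
  unfold mahalanobisSq
  fun_prop

end MahalanobisSq

section Densities

variable {p : ℕ} (μ : Fin p → ℝ)

lemma mvnPdf_eq_mul_exp (C : Matrix (Fin p) (Fin p) ℝ) (x : Fin p → ℝ) :
    mvnPdf p μ C x = mvnPdf p μ C μ * Real.exp (-(mahalanobisSq C (x - μ) / 2)) := by
  simp only [mvnPdf, mahalanobisSq, sub_self, zero_dotProduct, mul_zero, Real.exp_zero, mul_one]
  ring_nf

@[fun_prop]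
lemma measurable_mvnPdf (C : Matrix (Fin p) (Fin p) ℝ) : Measurable (mvnPdf p μ C) := by
  rw [funext (mvnPdf_eq_mul_exp μ C)]
  fun_prop

lemma sqrt_pow_mul_mvnPdf_sqrt_smul (S : Matrix (Fin p) (Fin p) ℝ) {u : ℝ} (hu : 0 ≤ u)
    (v : Fin p → ℝ) :
    √u ^ p * mvnPdf p 0 S (√u • v) =
      mvnPdf p 0 S 0 * (u ^ ((p : ℝ) / 2) * Real.exp (-(mahalanobisSq S v / 2 * u))) := by
  rw [mvnPdf_eq_mul_exp, sub_zero, mahalanobisSq_smul, Real.sq_sqrt hu,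
    Real.rpow_div_two_eq_sqrt _ hu, Real.rpow_natCast]
  ring_nf

lemma mvtPdf_eq_mvnPdf_mul (S : Matrix (Fin p) (Fin p) ℝ) {ν : ℝ} (hν : 0 < ν) (x : Fin p → ℝ)
    (hx : 0 ≤ mahalanobisSq S (x - μ)) :
    mvtPdf p μ S ν x =
      mvnPdf p 0 S 0 * (Real.Gamma (ν / 2 + p / 2) / Real.Gamma (ν / 2) *
        ((ν / 2) ^ (ν / 2) / (ν / 2 + mahalanobisSq S (x - μ) / 2) ^ (ν / 2 + p / 2 : ℝ))) := by
  have hnormal : mvnPdf p 0 S 0 = ((2 * Real.pi) ^ (p / 2 : ℝ))⁻¹ * S.det ^ (-(1 : ℝ) / 2) := by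
    simp [mvnPdf, neg_div, Real.rpow_neg Real.two_pi_pos.le]
  have hmvt : mvtPdf p μ S ν x = Real.Gamma (ν / 2 + p / 2) * S.det ^ (-(1 : ℝ) / 2) /
      ((Real.pi * ν) ^ (p / 2 : ℝ) * Real.Gamma (ν / 2)) *
        (1 + mahalanobisSq S (x - μ) / ν) ^ (-(ν / 2 + p / 2) : ℝ) := by
    rw [mvtPdf, mahalanobisSq, add_div]
  set q := mahalanobisSq S (x - μ)
  have hpi : (Real.pi * ν) ^ (p / 2 : ℝ) = (2 * Real.pi) ^ (p / 2 : ℝ) * (ν / 2) ^ (p / 2 : ℝ) := by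
    rw [← Real.mul_rpow (by positivity) (by positivity)]
    ring_nf
  have hrate : (ν / 2 + q / 2) ^ (ν / 2 + p / 2 : ℝ) =
      (ν / 2) ^ (ν / 2) * (ν / 2) ^ (p / 2 : ℝ) * (1 + q / ν) ^ (ν / 2 + p / 2 : ℝ) := by
    rw [← Real.rpow_add (by positivity), ← Real.mul_rpow (by positivity) (by positivity)]
    congr 1
    field_simp
  have hshape : (ν / 2) ^ (ν / 2) ≠ 0 := (Real.rpow_pos_of_pos (by positivity) _).ne'
  rw [hnormal, hmvt, hpi, hrate, Real.rpow_neg (by positivity)]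
  field_simp

lemma lintegral_sqrt_pow_mul_mvnPdf_gammaMeasure {S : Matrix (Fin p) (Fin p) ℝ} (hS : S.PosDef)
    {ν : ℝ} (hν : 0 < ν) (x : Fin p → ℝ) :
    ∫⁻ u, ENNReal.ofReal (√u ^ p) * ENNReal.ofReal (mvnPdf p 0 S (√u • (x - μ)))
        ∂gammaMeasure (ν / 2) (ν / 2) =
      ENNReal.ofReal (mvtPdf p μ S ν x) := by
  have hq := mahalanobisSq_nonneg hS (x - μ)
  calc
    _ = ∫⁻ u, ENNReal.ofReal (mvnPdf p 0 S 0) * ENNReal.ofReal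
          (u ^ ((p : ℝ) / 2) * Real.exp (-(mahalanobisSq S (x - μ) / 2 * u)))
          ∂gammaMeasure (ν / 2) (ν / 2) := by
      refine lintegral_congr_ae ?_
      filter_upwards [ae_pos_gammaMeasure (ν / 2) (ν / 2)] with u hu
      rw [← ENNReal.ofReal_mul (by positivity), sqrt_pow_mul_mvnPdf_sqrt_smul S hu.le,
        ENNReal.ofReal_mul' (by positivity)]
    _ = _ := by
      rw [lintegral_const_mul _ (by fun_prop),
        lintegral_rpow_mul_exp_gammaMeasure (by positivity) (by positivity),
        ← ENNReal.ofReal_mul' (by positivity), mvtPdf_eq_mvnPdf_mul μ S hν x hq]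

end Densities

/-- If `Y ~ N_p(0, Σ)` and, independently, `U ~ Gamma(ν/2, ν/2)`, then
`X = μ + Y / √U` has the multivariate t distribution `t_p(μ, Σ, ν)`. -/
theorem scale_mixture_is_mvt (p : ℕ) (hp : 0 < p) (μ : Fin p → ℝ)
    (S : Matrix (Fin p) (Fin p) ℝ) (hSsymm : S.IsSymm) (hSpos : S.PosDef)
    (ν : ℝ) (hν : 0 < ν)
    {Ω : Type*} [MeasurableSpace Ω] (P : Measure Ω) [IsProbabilityMeasure P]
    (Y : Ω → (Fin p → ℝ)) (U : Ω → ℝ) (hYm : Measurable Y) (hUm : Measurable U)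
    (hY : P.map Y = volume.withDensity fun y => ENNReal.ofReal (mvnPdf p 0 S y))
    (hU : P.map U = gammaMeasure (ν / 2) (ν / 2))
    (hindep : IndepFun Y U P) :
    P.map (fun ω => μ + fun i => Y ω i / Real.sqrt (U ω)) =
      volume.withDensity fun x => ENNReal.ofReal (mvtPdf p μ S ν x) := by
  have hUpos : ∀ᵐ ω ∂P, 0 < U ω :=
    (ae_map_iff hUm.aemeasurable measurableSet_Ioi).1 (hU ▸ ae_pos_gammaMeasure _ _)
  have hpdf : Measurable fun y ↦ ENNReal.ofReal (mvnPdf p 0 S y) := by fun_prop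
  have hX : (fun ω ↦ μ + fun i ↦ Y ω i / √(U ω)) = fun ω ↦ μ + (√(U ω))⁻¹ • Y ω := by
    ext ω i
    simp [div_eq_inv_mul]
  rw [hX, map_add_inv_smul_eq_withDensity_of_indepFun volume hYm.aemeasurable
    hUm.sqrt.aemeasurable (hindep.comp measurable_id Real.continuous_sqrt.measurable)
    (hUpos.mono fun ω hω ↦ (Real.sqrt_pos.2 hω).ne') hpdf hY μ]
  congr with x
  rw [← lintegral_sqrt_pow_mul_mvnPdf_gammaMeasure μ hSpos hν x, ← hU,
    lintegral_map (by fun_prop) hUm]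
  simp only [Module.finrank_fin_fun, abs_of_nonneg (pow_nonneg (Real.sqrt_nonneg _) _)]
end

section
/- Let Σ be a symmetric positive definite p×p matrix, μ ∈ ℝ^p, and ν > 0. The maximum likelihood score function for the location parameter, Ψ_μ(x) = ((ν+p)/(ν + s(x))) Σ^{-1}(x − μ) with s(x) = (x−μ)ᵀ Σ^{-1}(x−μ), tends to the zero vector as ‖x‖ → ∞: lim_{‖x‖→∞} Ψ_μ(x) = 0. -/
open Matrix Filter Topology

open Asymptotics Bornology

/-!
Centre at `y = x - μ`. By compactness of the unit sphere and homogeneity, `‖y‖ ^ 2` is bounded by a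
multiple of `yᵀ S⁻¹ y`, so the denominator `ν + yᵀ S⁻¹ y` grows quadratically, while the vector
`S⁻¹ y` grows at most linearly.
-/

theorem isBigO_norm_pow_cobounded_of_posHomogeneous {E F : Type*} [NormedAddCommGroup E]
    [NormedSpace ℝ E] [ProperSpace E] [NormedAddCommGroup F] [NormedSpace ℝ F] {q : E → F} {k : ℕ}
    (hcont : Continuous q) (hsmul : ∀ t : ℝ, 0 < t → ∀ y, q (t • y) = t ^ k • q y)
    (hne : ∀ y ≠ 0, q y ≠ 0) :
    (fun y => ‖y‖ ^ k) =O[cobounded E] q := by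
  obtain ⟨c, hc, hle⟩ : ∃ c > 0, ∀ u ∈ Metric.sphere (0 : E) 1, c ≤ ‖q u‖ :=
    (isCompact_sphere 0 1).exists_forall_le' hcont.norm.continuousOn fun u hu =>
      norm_pos_iff.mpr (hne u (ne_zero_of_mem_unit_sphere ⟨u, hu⟩))
  refine .of_bound c⁻¹ ?_
  filter_upwards [eventually_ne_cobounded (0 : E)] with y hy
  have hunit : ‖y‖⁻¹ • y ∈ Metric.sphere (0 : E) 1 := by simp [norm_smul, hy]
  have hpolar : q y = ‖y‖ ^ k • q (‖y‖⁻¹ • y) := by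
    rw [← hsmul _ (norm_pos_iff.mpr hy), smul_inv_smul₀ (norm_ne_zero_iff.mpr hy)]
  rw [norm_pow, norm_norm, le_inv_mul_iff₀ hc]
  calc c * ‖y‖ ^ k ≤ ‖q (‖y‖⁻¹ • y)‖ * ‖y‖ ^ k := by gcongr; exact hle _ hunit
    _ = ‖q y‖ := by rw [hpolar, norm_smul, norm_pow, norm_norm, mul_comm]

theorem tendsto_div_const_add_smul_cobounded {E F : Type*} [NormedAddCommGroup E]
    [NormedAddCommGroup F] [NormedSpace ℝ F] {q : E → ℝ} {g : E → F}
    (hq : (fun y => ‖y‖ ^ 2) =O[cobounded E] q) (hg : g =O[cobounded E] id) (a b : ℝ) :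
    Tendsto (fun y => (a / (b + q y)) • g y) (cobounded E) (𝓝 0) := by
  have hnorm : (fun y : E => ‖y‖) =o[cobounded E] fun y => ‖y‖ ^ 2 := by
    simpa only [Function.comp_def, pow_one] using
      (isLittleO_pow_pow_atTop_of_lt (𝕜 := ℝ) one_lt_two).comp_tendsto
        (tendsto_norm_cobounded_atTop (E := E))
  have hid : (id : E → E) =o[cobounded E] q := hnorm.of_norm_left.trans_isBigO hq
  have hconst : (fun _ => b) =o[cobounded E] q := (isLittleO_const_id_cobounded b).trans hid
  have hlittle : g =o[cobounded E] fun y => b + q y :=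
    (hg.trans_isLittleO hid).trans_isBigO hconst.right_isBigO_add
  simpa only [div_eq_mul_inv, mul_smul, smul_zero] using
    hlittle.tendsto_inv_smul_nhds_zero.const_smul a

theorem isBigO_norm_sq_dotProduct_mulVec_of_posDef {n : Type*} [Fintype n] {A : Matrix n n ℝ}
    (hA : A.PosDef) :
    (fun y : n → ℝ => ‖y‖ ^ 2) =O[cobounded (n → ℝ)] fun y => y ⬝ᵥ (A *ᵥ y) := by
  refine isBigO_norm_pow_cobounded_of_posHomogeneous (by fun_prop) (fun t _ y => ?_) fun y hy => ?_
  · simp only [mulVec_smul, dotProduct_smul, smul_dotProduct, smul_smul, sq]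
  · simpa using (hA.dotProduct_mulVec_pos hy).ne'

theorem ml_location_score_redescending_general {n : Type*} [Fintype n] [DecidableEq n]
    (μ : n → ℝ) {S : Matrix n n ℝ} (hS : S.PosDef) (a ν : ℝ) :
    Tendsto
      (fun x : n → ℝ => (a / (ν + (x - μ) ⬝ᵥ (S⁻¹ *ᵥ (x - μ)))) • (S⁻¹ *ᵥ (x - μ)))
      (cobounded (n → ℝ)) (𝓝 0) := by
  have hlinear : (fun y => S⁻¹ *ᵥ y) =O[cobounded (n → ℝ)] id :=
    S⁻¹.mulVecLin.toContinuousLinearMap.isBigO_id _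
  exact (tendsto_div_const_add_smul_cobounded
    (isBigO_norm_sq_dotProduct_mulVec_of_posDef hS.inv) hlinear a ν).comp
    (tendsto_sub_const_cobounded μ)

/-- The ML score function for the location parameter of the multivariate t
distribution, `Ψ_μ(x) = ((ν+p)/(ν+s(x))) Σ⁻¹ (x - μ)`, tends to the zero vector
as `‖x‖ → ∞`. -/
theorem ml_location_score_redescending (p : ℕ) (hp : 0 < p) (μ : Fin p → ℝ)
    (S : Matrix (Fin p) (Fin p) ℝ) (hSsymm : S.IsSymm) (hSpos : S.PosDef)
    (ν : ℝ) (hν : 0 < ν) :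
    Tendsto
      (fun x : Fin p → ℝ =>
        ((ν + p) / (ν + (x - μ) ⬝ᵥ (S⁻¹ *ᵥ (x - μ)))) • (S⁻¹ *ᵥ (x - μ)))
      (comap (fun x : Fin p → ℝ => ‖x‖) atTop) (𝓝 0) := by
  rw [comap_norm_atTop]
  exact ml_location_score_redescending_general μ hSpos (ν + p) ν
end
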